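/- arXiv:2202.05990 — 3 statements merged into one kernel-verified Lean document; each statement's English description precedes it below -/
import Mathlib

section
/- Monotonicity of the in-H-index in the order: for every finite directed graph G, every vertex v, and every natural number n, it holds that iH_G^(n+1)(v) ≤ iH_G^(n)(v). In particular, the sequence n ↦ iH_G^(n)(v) is non-increasing and eventually constant; its eventual value is denoted iH_G^(∞)(v). -/
open Finset

variable {V : Type*} [Fintype V] [DecidableEq V]

/-- The in-neighbors of `v` within `S`: vertices `u ∈ S` with an edge `u → v`. -/
def inN (E : V → V → Prop) [DecidableRel E] (S : Finset V) (v : V) : Finset V :=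
  S.filter (fun u => E u v)

/-- The out-neighbors of `v` within `S`: vertices `u ∈ S` with an edge `v → u`. -/
def outN (E : V → V → Prop) [DecidableRel E] (S : Finset V) (v : V) : Finset V :=
  S.filter (fun u => E v u)

/-- `S` satisfies the `(k,l)`-degree constraints: every `v ∈ S` has at least `k`
in-neighbors in `S` and at least `l` out-neighbors in `S`. -/
def satisfiesKL (E : V → V → Prop) [DecidableRel E] (k l : ℕ) (S : Finset V) : Prop :=
  ∀ v ∈ S, k ≤ (inN E S v).card ∧ l ≤ (outN E S v).card

instance (E : V → V → Prop) [DecidableRel E] (k l : ℕ) (S : Finset V) :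
    Decidable (satisfiesKL E k l S) := by unfold satisfiesKL; infer_instance

/-- The `(k,l)`-core of the graph: the union of all vertex subsets satisfying the
`(k,l)`-degree constraints. -/
def core (E : V → V → Prop) [DecidableRel E] (k l : ℕ) : Finset V :=
  (Finset.univ.powerset.filter (satisfiesKL E k l)).sup id

/-- `kmax E v`: the largest `k` such that `v` belongs to the `(k,0)`-core. -/
noncomputable def kmax (E : V → V → Prop) [DecidableRel E] (v : V) : ℕ :=
  sSup {k : ℕ | v ∈ core E k 0}

/-- `lmax E v k`: the largest `l` such that `v` belongs to the `(k,l)`-core. -/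
noncomputable def lmax (E : V → V → Prop) [DecidableRel E] (v : V) (k : ℕ) : ℕ :=
  sSup {l : ℕ | v ∈ core E k l}

/-- The H-index of a finite multiset of naturals: the largest `h` such that at least
`h` elements (with multiplicity) are `≥ h`. -/
noncomputable def hIndex (M : Multiset ℕ) : ℕ :=
  sSup {h : ℕ | h ≤ (M.filter (fun x => h ≤ x)).card}

/-- The `n`-order in-H-index of a vertex `v` in the graph with vertex set `S`
and edge relation `E`. -/
noncomputable def iH (E : V → V → Prop) [DecidableRel E] (S : Finset V) : ℕ → V → ℕ
  | 0 => fun v => (inN E S v).card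
  | n + 1 => fun v => hIndex ((inN E S v).val.map (iH E S n))

/-- The `n`-order out-H-index of a vertex `v` in the graph with vertex set `S`
and edge relation `E`. -/
noncomputable def oH (E : V → V → Prop) [DecidableRel E] (S : Finset V) : ℕ → V → ℕ
  | 0 => fun v => (outN E S v).card
  | n + 1 => fun v => hIndex ((outN E S v).val.map (oH E S n))

/-- The eventual (limit) value of the in-H-index sequence. -/
noncomputable def iHlim (E : V → V → Prop) [DecidableRel E] (S : Finset V) (v : V) : ℕ :=
  ⨅ n, iH E S n v

/-- The eventual (limit) value of the out-H-index sequence. -/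
noncomputable def oHlim (E : V → V → Prop) [DecidableRel E] (S : Finset V) (v : V) : ℕ :=
  ⨅ n, oH E S n v

/-- `(k,l)` is a skyline coreness of `v`: `v` is in the `(k,l)`-core and there is no
pair `(k',l')` strictly dominating `(k,l)` with `v` in the `(k',l')`-core. -/
def skyline (E : V → V → Prop) [DecidableRel E] (v : V) (p : ℕ × ℕ) : Prop :=
  v ∈ core E p.1 p.2 ∧
    ¬ ∃ q : ℕ × ℕ, (p.1 ≤ q.1 ∧ p.2 ≤ q.2 ∧ p ≠ q) ∧ v ∈ core E q.1 q.2

theorem le_hIndex_iff {M : Multiset ℕ} {h : ℕ} :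
    h ≤ hIndex M ↔ h ≤ (M.filter (h ≤ ·)).card := by
  have bdd : BddAbove {k : ℕ | k ≤ (M.filter (k ≤ ·)).card} :=
    ⟨M.card, fun _ hk => hk.trans (Multiset.card_le_card (Multiset.filter_le _ _))⟩
  have nonempty : {k : ℕ | k ≤ (M.filter (k ≤ ·)).card}.Nonempty := ⟨0, Nat.zero_le _⟩
  refine ⟨fun hle => ?_, fun hcard => le_csSup bdd hcard⟩
  calc
    h ≤ hIndex M := hle
    _ ≤ (M.filter (hIndex M ≤ ·)).card := Nat.sSup_mem nonempty bdd
    _ ≤ (M.filter (h ≤ ·)).card :=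
      Multiset.card_le_card (Multiset.monotone_filter_right M fun _ => hle.trans)

theorem hIndex_le_card (M : Multiset ℕ) : hIndex M ≤ M.card :=
  (le_hIndex_iff.mp le_rfl).trans (Multiset.card_le_card (Multiset.filter_le _ _))

theorem monotone_hIndex_map {α : Type*} (s : Multiset α) :
    Monotone fun f : α → ℕ => hIndex (s.map f) := by
  intro f g hfg
  have card_filter_map (f : α → ℕ) (h : ℕ) :
      ((s.map f).filter (h ≤ ·)).card = (s.filter (h ≤ f ·)).card := by
    rw [← Multiset.countP_eq_card_filter, Multiset.countP_map]
  refine le_hIndex_iff.mpr ?_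
  calc
    hIndex (s.map f) ≤ ((s.map f).filter (hIndex (s.map f) ≤ ·)).card := le_hIndex_iff.mp le_rfl
    _ = (s.filter (hIndex (s.map f) ≤ f ·)).card := card_filter_map f _
    _ ≤ (s.filter (hIndex (s.map f) ≤ g ·)).card :=
      Multiset.card_le_card (Multiset.monotone_filter_right s fun a ha => ha.trans (hfg a))
    _ = ((s.map g).filter (hIndex (s.map f) ≤ ·)).card := (card_filter_map g _).symm

section InHIndex

variable {α : Type*} (E : α → α → Prop) [DecidableRel E] (S : Finset α)

theorem iH_one_le_iH_zero : iH E S 1 ≤ iH E S 0 := fun v =>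
  calc
    iH E S 1 v ≤ ((inN E S v).val.map (iH E S 0)).card := hIndex_le_card _
    _ = iH E S 0 v := Multiset.card_map _ _

theorem antitone_iH : Antitone (iH E S) := by
  refine antitone_nat_of_succ_le fun n => ?_
  induction n with
  | zero => exact iH_one_le_iH_zero E S
  | succ n ih => exact fun v => monotone_hIndex_map (inN E S v).val ih

theorem iH_antitone_and_eventually_const_general (v : α) :
    (∀ n : ℕ, iH E S (n + 1) v ≤ iH E S n v) ∧
    (∃ N : ℕ, ∀ n : ℕ, N ≤ n → iH E S n v = iH E S N v) := by
  have antitone_at_v : Antitone fun n => iH E S n v := fun _ _ hmn => antitone_iH E S hmn v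
  obtain ⟨N, hN⟩ := WellFoundedLT.antitone_chain_condition antitone_at_v
  exact ⟨fun n => antitone_at_v n.le_succ, N, fun n hn => (hN n hn).symm⟩

end InHIndex

/-- **Monotonicity of the in-H-index in the order.** The sequence
`n ↦ iH_G^(n)(v)` is non-increasing, hence eventually constant. -/
theorem iH_antitone_and_eventually_const (E : V → V → Prop) [DecidableRel E] (v : V) :
    (∀ n : ℕ, iH E Finset.univ (n + 1) v ≤ iH E Finset.univ n v) ∧
    (∃ N : ℕ, ∀ n : ℕ, N ≤ n → iH E Finset.univ n v = iH E Finset.univ N v) :=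
  iH_antitone_and_eventually_const_general E univ v
end

section
/- Convergence of the out-H-index (out-degree analogue of Theorem 4.1): for every finite directed graph G' and every vertex v of G', the non-increasing sequence n ↦ oH_{G'}^(n)(v) is eventually constant, and its eventual value oH_{G'}^(∞)(v) equals the largest l such that v belongs to the (0,l)-core of G'. -/
open Finset

variable {V : Type*} [Fintype V] [DecidableEq V]

/-!
The H-index is monotone and bounded by the cardinality, so the iterates `oH E S n` of the
operator sending `f` to `v ↦ hIndex ((outN E S v).val.map f)` decrease, and their eventual value
`oHlim E S` is a fixed point of that operator. Being a fixed point means that each superlevel set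
`{v ∈ S | l ≤ oHlim E S v}` satisfies the `(0, l)`-degree constraints. Conversely, a subset of
`S` satisfying the `(k, l)`-degree constraints stays inside `{v ∈ S | l ≤ oH E S n v}` at every
stage `n`. Hence for `S = univ` the superlevel set at height `l` is the `(0, l)`-core.
-/

section HIndex

variable {α : Type*} {s : Finset α} {f g : α → ℕ}

theorem le_hIndex_map_iff {h : ℕ} : h ≤ hIndex (s.val.map f) ↔ h ≤ #{u ∈ s | h ≤ f u} := by
  rw [le_hIndex_iff, Multiset.filter_map, Multiset.card_map]
  rfl

theorem hIndex_map_le_hIndex_map (hfg : ∀ u ∈ s, f u ≤ g u) :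
    hIndex (s.val.map f) ≤ hIndex (s.val.map g) := by
  rw [le_hIndex_map_iff]
  exact (le_hIndex_map_iff.1 le_rfl).trans
    (card_le_card (monotone_filter_right s fun u hu hle ↦ hle.trans (hfg u hu)))

end HIndex

theorem eventually_eq_iInf_of_antitone {ι : Type*} [Preorder ι] {a : ι → ℕ} (ha : Antitone a) :
    ∀ᶠ n in Filter.atTop, a n = ⨅ i, a i := by
  have tendsto_iInf := tendsto_atTop_ciInf ha (OrderBot.bddBelow _)
  rwa [nhds_discrete, Filter.tendsto_pure] at tendsto_iInf

section OutHIndex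

variable {α : Type*} (E : α → α → Prop) [DecidableRel E] (S : Finset α)

theorem oH_succ_le (n : ℕ) (v : α) : oH E S (n + 1) v ≤ oH E S n v := by
  induction n generalizing v with
  | zero => exact (hIndex_le_card _).trans_eq (Multiset.card_map _ _)
  | succ n ih => exact hIndex_map_le_hIndex_map fun u _ ↦ ih u

theorem eventually_oH_eq_oHlim (v : α) : ∀ᶠ n in Filter.atTop, oH E S n v = oHlim E S v :=
  eventually_eq_iInf_of_antitone (antitone_nat_of_succ_le fun n ↦ oH_succ_le E S n v)

theorem oHlim_eq_hIndex_map_oHlim (v : α) :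
    oHlim E S v = hIndex ((outN E S v).val.map (oHlim E S)) := by
  have stable_at_v : ∀ᶠ n in Filter.atTop, oH E S (n + 1) v = oHlim E S v :=
    (Filter.tendsto_add_atTop_nat 1).eventually (eventually_oH_eq_oHlim E S v)
  have stable_at_outN : ∀ᶠ n in Filter.atTop, ∀ u ∈ outN E S v, oH E S n u = oHlim E S u :=
    (Filter.eventually_all_finset _).2 fun u _ ↦ eventually_oH_eq_oHlim E S u
  obtain ⟨n, hv, houtN⟩ := (stable_at_v.and stable_at_outN).exists
  calc oHlim E S v = hIndex ((outN E S v).val.map (oH E S n)) := hv.symm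
    _ = hIndex ((outN E S v).val.map (oHlim E S)) :=
      congrArg hIndex (Multiset.map_congr rfl houtN)

theorem satisfiesKL_zero_filter_le_oHlim (l : ℕ) :
    satisfiesKL E 0 l {u ∈ S | l ≤ oHlim E S u} := by
  intro v hv
  have hle : l ≤ oHlim E S v := (mem_filter.1 hv).2
  rw [oHlim_eq_hIndex_map_oHlim, le_hIndex_map_iff, outN, filter_comm] at hle
  exact ⟨Nat.zero_le _, hle⟩

variable {E S}

theorem satisfiesKL.le_oH {k l : ℕ} {T : Finset α} (hT : satisfiesKL E k l T) (hTS : T ⊆ S)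
    (n : ℕ) {v : α} (hv : v ∈ T) : l ≤ oH E S n v := by
  have outN_subset (v : α) : outN E T v ⊆ outN E S v := filter_subset_filter _ hTS
  induction n generalizing v with
  | zero => exact (hT v hv).2.trans (card_le_card (outN_subset v))
  | succ n ih =>
    refine le_hIndex_map_iff.2 ((hT v hv).2.trans (card_le_card fun u hu ↦ ?_))
    exact mem_filter.2 ⟨outN_subset v hu, ih (mem_filter.1 hu).1⟩

theorem le_oHlim_iff_exists_satisfiesKL {l : ℕ} {v : α} (hv : v ∈ S) :
    l ≤ oHlim E S v ↔ ∃ T ⊆ S, satisfiesKL E 0 l T ∧ v ∈ T := by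
  constructor
  · exact fun hle ↦ ⟨_, filter_subset _ S, satisfiesKL_zero_filter_le_oHlim E S l,
      mem_filter.2 ⟨hv, hle⟩⟩
  · rintro ⟨T, hTS, hT, hvT⟩
    exact le_ciInf fun n ↦ hT.le_oH hTS n hvT

end OutHIndex

section Core

variable {E : V → V → Prop} [DecidableRel E]

theorem mem_core_iff {k l : ℕ} {v : V} : v ∈ core E k l ↔ ∃ S, satisfiesKL E k l S ∧ v ∈ S := by
  simp [core, mem_sup]

theorem mem_core_zero_iff_le_oHlim {l : ℕ} {v : V} :
    v ∈ core E 0 l ↔ l ≤ oHlim E univ v := by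
  simp [mem_core_iff, le_oHlim_iff_exists_satisfiesKL (mem_univ v)]

end Core

/-- **out-degree analogue of Theorem 4.1.** The non-increasing sequence
`n ↦ oH_{G'}^(n)(v)` is eventually constant, and its eventual value equals the largest
`l` such that `v` belongs to the `(0,l)`-core of `G'`. -/
theorem oHlim_eq_lmax_zero (E : V → V → Prop) [DecidableRel E] (v : V) :
    (∀ n : ℕ, oH E Finset.univ (n + 1) v ≤ oH E Finset.univ n v) ∧
    (∃ N : ℕ, ∀ n : ℕ, N ≤ n → oH E Finset.univ n v = oHlim E Finset.univ v) ∧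
    oHlim E Finset.univ v = lmax E v 0 := by
  refine ⟨fun n ↦ oH_succ_le E univ n v,
    Filter.eventually_atTop.1 (eventually_oH_eq_oHlim E univ v), ?_⟩
  have core_levels : {l | v ∈ core E 0 l} = Set.Iic (oHlim E univ v) :=
    Set.ext fun _ ↦ mem_core_zero_iff_le_oHlim
  rw [lmax, core_levels, csSup_Iic]
end

section
/- Skyline corenesses determine core membership: let G be a finite directed graph and v a vertex. For all natural numbers k, l, the vertex v belongs to the (k,l)-core of G if and only if there exists a skyline coreness (k',l') of v with k ≤ k' and l ≤ l'. -/
open Finset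

variable {V : Type*} [Fintype V] [DecidableEq V]

section

variable {E : V → V → Prop} [DecidableRel E] {v : V} {k k' l l' : ℕ}

omit [Fintype V] [DecidableEq V] in
lemma satisfiesKL.anti {S : Finset V} (hS : satisfiesKL E k' l' S) (hk : k ≤ k') (hl : l ≤ l') :
    satisfiesKL E k l S :=
  fun u hu => ⟨hk.trans (hS u hu).1, hl.trans (hS u hu).2⟩

lemma mem_core : v ∈ core E k l ↔ ∃ S : Finset V, satisfiesKL E k l S ∧ v ∈ S := by
  simp [core, Finset.mem_sup]

lemma core_anti (hk : k ≤ k') (hl : l ≤ l') : core E k' l' ⊆ core E k l := by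
  intro u hu
  obtain ⟨S, hS, huS⟩ := mem_core.1 hu
  exact mem_core.2 ⟨S, hS.anti hk hl, huS⟩

lemma le_degrees_of_mem_core (hv : v ∈ core E k l) :
    k ≤ #(inN E univ v) ∧ l ≤ #(outN E univ v) := by
  obtain ⟨S, hS, hvS⟩ := mem_core.1 hv
  have hin : inN E S v ⊆ inN E univ v := filter_subset_filter _ (subset_univ S)
  have hout : outN E S v ⊆ outN E univ v := filter_subset_filter _ (subset_univ S)
  exact ⟨(hS v hvS).1.trans (card_le_card hin), (hS v hvS).2.trans (card_le_card hout)⟩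

variable (E v) in
lemma finite_setOf_mem_core : {p : ℕ × ℕ | v ∈ core E p.1 p.2}.Finite :=
  (Set.finite_Iic (#(inN E univ v), #(outN E univ v))).subset fun _ hp =>
    Prod.mk_le_mk.2 (le_degrees_of_mem_core hp)

lemma skyline_iff_maximal {p : ℕ × ℕ} :
    skyline E v p ↔ Maximal (fun q : ℕ × ℕ => v ∈ core E q.1 q.2) p := by
  rw [maximal_iff]
  refine and_congr_right fun _ => ?_
  constructor
  · intro hmax q hq hpq
    by_contra hne
    exact hmax ⟨q, ⟨hpq.1, hpq.2, hne⟩, hq⟩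
  · rintro hmax ⟨q, ⟨hk, hl, hne⟩, hq⟩
    exact hne (hmax hq ⟨hk, hl⟩)

end

/-- **Skyline corenesses determine core membership.** `v` belongs to the
`(k,l)`-core iff some skyline coreness `(k',l')` of `v` satisfies `k ≤ k'` and `l ≤ l'`. -/
theorem mem_core_iff_skyline (E : V → V → Prop) [DecidableRel E] (v : V) (k l : ℕ) :
    v ∈ core E k l ↔ ∃ p : ℕ × ℕ, skyline E v p ∧ k ≤ p.1 ∧ l ≤ p.2 := by
  constructor
  · intro hv
    obtain ⟨p, hle, hmax⟩ := (finite_setOf_mem_core E v).exists_le_maximal (a := (k, l)) hv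
    exact ⟨p, skyline_iff_maximal.2 hmax, hle.1, hle.2⟩
  · rintro ⟨p, ⟨hp, -⟩, hk, hl⟩
    exact core_anti hk hl hp
end
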